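/- Let G be a finite r-regular graph on n vertices with girth g, equipped with a random label assignment with probabilities (p₀,p), and let N be a positive integer with 2N < g−3. Let P = R_{≤N} and let P̄ be obtained from P by deleting both endpoints of every edge of G whose two endpoints have equal relevant labels. Then the expected cardinality of P̄ satisfies E|P̄| ≥ p₀·(1−p₀)^r·n + Σ_{i=1}^{N} p·(1−p)^r·b_{i−1}·n. -/

import Mathlib

open MeasureTheory ProbabilityTheory Filter Set

namespace InducedForest

variable {V : Type*}

/-- Label `i` is *relevant* for vertex `v` (w.r.t. the label assignment `S`):
either `i = 0` and `0 ∈ S v`, or `i ∈ S v`, no `j < i` is relevant for `v`, and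
there is a unique neighbour of `v` having a relevant label strictly smaller than `i`. -/
def Relevant (G : SimpleGraph V) (S : V → Set ℕ) (i : ℕ) : V → Prop :=
  Nat.strongRecOn i (fun i ih v =>
    (i = 0 ∧ 0 ∈ S v) ∨
    (i ∈ S v ∧ (∀ j, (h : j < i) → ¬ ih j h v) ∧
      (∃! u, G.Adj v u ∧ ∃ j, ∃ h : j < i, ih j h u)))

/-- `v` has some relevant label `≤ l`, i.e. `v ∈ R_{≤ l}`. -/
def RelevantLe (G : SimpleGraph V) (S : V → Set ℕ) (l : ℕ) (v : V) : Prop :=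
  ∃ i ≤ l, Relevant G S i v

inductive Colour | white | blue | orange | purple
deriving DecidableEq

open Classical in
/-- The colour of `u` at time `l`. -/
noncomputable def colourAt (G : SimpleGraph V) (S : V → Set ℕ) (l : ℕ) (u : V) : Colour :=
  if RelevantLe G S l u then Colour.purple
  else if ∀ v, G.Adj u v → ¬ RelevantLe G S l v then Colour.white
  else if ∃! v, G.Adj u v ∧ RelevantLe G S l v then Colour.blue
  else Colour.orange

/-- The set `W_l` of white vertices at time `l`. -/
def White (G : SimpleGraph V) (S : V → Set ℕ) (l : ℕ) : Set V :=
  {u | ¬ RelevantLe G S l u ∧ ∀ v, G.Adj u v → ¬ RelevantLe G S l v}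

/-- The set `B_l` of blue vertices at time `l`. -/
def Blue (G : SimpleGraph V) (S : V → Set ℕ) (l : ℕ) : Set V :=
  {u | ¬ RelevantLe G S l u ∧ ∃! v, G.Adj u v ∧ RelevantLe G S l v}
/-- The label assignment determined by a sample point `ω`. -/
def labels (ω : V → ℕ → Bool) : V → Set ℕ := fun v => {i | ω v i = true}

/-- `μ` is the random label assignment with probabilities `(p₀, p)`: the events
`i ∈ S(v)` are mutually independent, and each has probability `p₀` if `i = 0`
and `p` if `i ≥ 1`. -/
def IsLabelMeasure (μ : Measure (V → ℕ → Bool)) (p₀ p : ℝ) : Prop :=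
  IsProbabilityMeasure μ ∧
  iIndepSet (fun q : V × ℕ => {ω : V → ℕ → Bool | ω q.1 q.2 = true}) μ ∧
  ∀ (v : V) (i : ℕ), μ {ω | ω v i = true} = ENNReal.ofReal (if i = 0 then p₀ else p)

/-- Event that `u` is white at time `l`. -/
def WEv (G : SimpleGraph V) (l : ℕ) (u : V) : Set (V → ℕ → Bool) :=
  {ω | u ∈ White G (labels ω) l}

/-- Event that `u` is blue at time `l`. -/
def BEv (G : SimpleGraph V) (l : ℕ) (u : V) : Set (V → ℕ → Bool) :=
  {ω | u ∈ Blue G (labels ω) l}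

/-- Event that `u` has relevant label `i`, i.e. `u ∈ R_i`. -/
def REv (G : SimpleGraph V) (i : ℕ) (u : V) : Set (V → ℕ → Bool) :=
  {ω | Relevant G (labels ω) i u}

/-- Event that `u` has a relevant label `≤ l`, i.e. `u ∈ R_{≤ l}`. -/
def RLeEv (G : SimpleGraph V) (l : ℕ) (u : V) : Set (V → ℕ → Bool) :=
  {ω | RelevantLe G (labels ω) l u}

/-- `G` is `r`-regular. -/
def IsRegular (G : SimpleGraph V) (r : ℕ) : Prop :=
  ∀ v : V, (G.neighborSet v).ncard = r
/-- The set `P̄`: vertices with a relevant label `≤ N`, with both endpoints of every edge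
whose two endpoints have equal relevant labels deleted. -/
def Pbar (G : SimpleGraph V) (S : V → Set ℕ) (N : ℕ) : Set V :=
  {v | RelevantLe G S N v ∧
    ∀ x, G.Adj v x → ∀ i, Relevant G S i v → ¬ Relevant G S i x}

/-!
The event that `i` is relevant for `v` and that no neighbour of `v` carries the label `i` puts `v`
in `P̄`. For `i = 0` it has probability `p₀ (1 - p₀) ^ r`. For `i ≥ 1` it says that `v` is blue at
time `i - 1`, which depends only on the labels smaller than `i`, and, independently, that `v` is the
only vertex of its closed neighbourhood carrying `i`. As relevant labels are unique, these events
are disjoint for distinct `i`, and linearity of expectation sums them over `i` and `v`.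

That `b_j` does not depend on the vertex is a coupling: the colour of `v` at time `j` is determined
by the labels in the ball of radius `j + 1` around `v`. When the girth exceeds `2 (j + 1)` every
such ball is a regular tree, up to edges between vertices at maximal distance from `v`, so any
vertex is carried to any other by a permutation of `V` respecting adjacency near it. Since
`V → ℕ → Bool` carries only one measure with the prescribed label law, that law is invariant under
permutations of `V`.
-/

theorem path_eq_of_length_add_length_lt_egirth {G : SimpleGraph V} {x y : V} {p q : G.Walk x y}
    (hp : p.IsPath) (hq : q.IsPath) (hlt : ((p.length + q.length : ℕ) : ℕ∞) < G.egirth) :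
    p = q := by
  classical
  set H : SimpleGraph V := SimpleGraph.fromEdgeSet {e | e ∈ p.edges ++ q.edges} with hH
  have mem_edgeSet_H {e : Sym2 V} : e ∈ H.edgeSet ↔ e ∈ p.edges ++ q.edges := by
    simp only [hH, SimpleGraph.edgeSet_fromEdgeSet, Set.mem_sdiff, Set.mem_ofPred_eq,
      and_iff_left_iff_imp, List.mem_append]
    exact fun he => G.not_isDiag_of_mem_edgeSet <|
      he.elim (p.edges_subset_edgeSet ·) (q.edges_subset_edgeSet ·)
  have le_G : H ≤ G := SimpleGraph.edgeSet_subset_edgeSet.1 fun e he =>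
    (List.mem_append.1 (mem_edgeSet_H.1 he)).elim
      (p.edges_subset_edgeSet ·) (q.edges_subset_edgeSet ·)
  have acyclic : H.IsAcyclic := by
    intro a c hc
    have length_le : c.length ≤ p.length + q.length := by
      rw [← c.length_edges, ← p.length_edges, ← q.length_edges, ← List.length_append]
      exact (hc.edges_nodup.subperm fun e he =>
        mem_edgeSet_H.1 (c.edges_subset_edgeSet he)).length_le
    exact (hlt.trans_le ((SimpleGraph.egirth_anti le_G).trans
      (SimpleGraph.egirth_le_length hc))).not_ge (by exact_mod_cast length_le)
  have hpH : ∀ e ∈ p.edges, e ∈ H.edgeSet := fun _ he =>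
    mem_edgeSet_H.2 (List.mem_append_left _ he)
  have hqH : ∀ e ∈ q.edges, e ∈ H.edgeSet := fun _ he =>
    mem_edgeSet_H.2 (List.mem_append_right _ he)
  have transfer_eq : p.transfer H hpH = q.transfer H hqH := congrArg Subtype.val
    ((acyclic.subsingleton_path x y).elim ⟨_, hp.transfer hpH⟩ ⟨_, hq.transfer hqH⟩)
  refine SimpleGraph.Walk.ext_support ?_
  rw [← p.support_transfer hpH, transfer_eq, q.support_transfer]

theorem eq_snd_of_mem_support_of_length_lt_egirth {G : SimpleGraph V} {x y z : V} {p : G.Walk x y}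
    (hp : p.IsPath) (hlt : ((p.length + 1 : ℕ) : ℕ∞) < G.egirth) (hadj : G.Adj x z)
    (hz : z ∈ p.support) : z = p.snd := by
  classical
  have takeUntil_eq : p.takeUntil z hz = hadj.toWalk := by
    refine path_eq_of_length_add_length_lt_egirth (hp.takeUntil hz) (by simp [hadj.ne]) ?_
    refine lt_of_le_of_lt ?_ hlt
    exact_mod_cast Nat.add_le_add_right (p.length_takeUntil_le_length hz) 1
  rw [← p.snd_takeUntil hadj.ne' hz, takeUntil_eq]
  rfl

/-- A numbering, for every ordered pair `(w, x)`, of the neighbours of `x` by `Fin r`, in which the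
number `0` is reserved for `w` when `w` is itself a neighbour of `x`. Reading `w` as the vertex from
which a walk arrived at `x`, the number `0` is the backtracking move. -/
structure Numbering (G : SimpleGraph V) (r : ℕ) where
  /-- The numbering of the neighbours of `x` for a walk arriving from `w`. -/
  nbr (w x : V) : Fin r ≃ G.neighborSet x
  nbr_eq_iff {w x : V} (h : G.Adj x w) (a : Fin r) : (nbr w x a : V) = w ↔ (a : ℕ) = 0

theorem IsRegular.nonempty_numbering {G : SimpleGraph V} [∀ v, Finite (G.neighborSet v)] {r : ℕ}
    (hreg : IsRegular G r) : Nonempty (Numbering G r) := by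
  classical
  let e (x : V) : Fin r ≃ G.neighborSet x :=
    (Finite.equivFinOfCardEq ((Nat.card_coe_set_eq _).trans (hreg x))).symm
  have exists_nbr (w x : V) : ∃ f : Fin r ≃ G.neighborSet x,
      G.Adj x w → ∀ a, (f a : V) = w ↔ (a : ℕ) = 0 := by
    by_cases hw : G.Adj x w
    · let a₀ : Fin r := ⟨0, ((e x).symm ⟨w, hw⟩).pos⟩
      let f := (Equiv.swap a₀ ((e x).symm ⟨w, hw⟩)).trans (e x)
      have hf : f a₀ = ⟨w, hw⟩ := by simp [f]
      refine ⟨f, fun _ a => ?_⟩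
      rw [← Fin.val_mk a₀.pos, ← Fin.ext_iff, ← f.apply_eq_iff_eq, hf, Subtype.ext_iff]
    · exact ⟨e x, fun h => absurd h hw⟩
  choose nbr hnbr using exists_nbr
  exact ⟨⟨nbr, fun {w x} => hnbr w x⟩⟩

/-- A word of moves, read from its last letter to its first, is reduced if no move other than the
initial one is the backtracking move `0`. -/
def IsReduced {r : ℕ} : List (Fin r) → Prop
  | [] => True
  | a :: l => IsReduced l ∧ (l = [] ∨ (a : ℕ) ≠ 0)

namespace Numbering

variable {G : SimpleGraph V} {r : ℕ} (L : Numbering G r)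

/-- The walk traced out from `u` by a word of moves, read from its last letter to its first. It is
recorded backwards, as a walk to `u`, so that a move is a `cons`; the first move is numbered as if
the walk had arrived at `u` from `u`. -/
def walk (u : V) : List (Fin r) → (x : V) × G.Walk x u
  | [] => ⟨u, .nil⟩
  | a :: l =>
    let p := walk u l
    ⟨L.nbr p.2.snd p.1 a, .cons (G.adj_symm (L.nbr p.2.snd p.1 a).2) p.2⟩

/-- The vertex reached from `u` by a word of moves. -/
def endpoint (u : V) (l : List (Fin r)) : V := (L.walk u l).1

/-- The neighbour of `L.endpoint u l` with number `a`. -/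
def next (u : V) (l : List (Fin r)) : Fin r ≃ G.neighborSet (L.endpoint u l) :=
  L.nbr (L.walk u l).2.snd (L.endpoint u l)

theorem adj_endpoint_iff {u z : V} {l : List (Fin r)} :
    G.Adj (L.endpoint u l) z ↔ ∃ a, (L.next u l a : V) = z :=
  ⟨fun h => ⟨(L.next u l).symm ⟨z, h⟩, by simp⟩, fun ⟨a, ha⟩ => ha ▸ (L.next u l a).2⟩

theorem length_walk (u : V) (l : List (Fin r)) : (L.walk u l).2.length = l.length := by
  induction l with
  | nil => rfl
  | cons a l ih => simp [walk, ih]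

theorem walk_injective (u : V) : Function.Injective (L.walk u) := by
  have cons_inj {x x' y y' : V} {h : G.Adj x y} {h' : G.Adj x' y'} {p : G.Walk y u}
      {p' : G.Walk y' u} (heq : (⟨x, .cons h p⟩ : (x : V) × G.Walk x u) = ⟨x', .cons h' p'⟩) :
      x = x' ∧ (⟨y, p⟩ : (x : V) × G.Walk x u) = ⟨y', p'⟩ := by
    cases heq
    exact ⟨rfl, rfl⟩
  intro l
  induction l with
  | nil =>
    intro l' h
    have hlen := congrArg (fun p : (x : V) × G.Walk x u => p.2.length) h
    simpa only [length_walk, List.length_nil, eq_comm, List.length_eq_zero_iff] using hlen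
  | cons a l ih =>
    rintro (_ | ⟨b, l'⟩) h
    · have hlen := congrArg (fun p : (x : V) × G.Walk x u => p.2.length) h
      simp [length_walk] at hlen
    · obtain ⟨hend, htail⟩ := cons_inj h
      obtain rfl := ih htail
      rw [(L.nbr _ _).injective (Subtype.ext hend)]

theorem isPath_walk (u : V) {l : List (Fin r)} (hl : IsReduced l)
    (hlt : (l.length : ℕ∞) < G.egirth) : (L.walk u l).2.IsPath := by
  induction l with
  | nil => exact .nil
  | cons a l ih =>
    have hlt' : (l.length : ℕ∞) < G.egirth := lt_of_le_of_lt (by simp) hlt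
    have hp := ih hl.1 hlt'
    refine hp.cons fun hmem => ?_
    have backtrack : (L.next u l a : V) = (L.walk u l).2.snd :=
      eq_snd_of_mem_support_of_length_lt_egirth hp (by rwa [length_walk]) (L.next u l a).2 hmem
    have hadj : G.Adj (L.endpoint u l) (L.walk u l).2.snd := backtrack ▸ (L.next u l a).2
    rcases hl.2 with rfl | ha
    · exact hadj.ne rfl
    · exact ha ((L.nbr_eq_iff hadj a).1 backtrack)

theorem eq_of_endpoint_eq {u : V} {l l' : List (Fin r)} (hl : IsReduced l) (hl' : IsReduced l')
    (hlt : ((l.length + l'.length : ℕ) : ℕ∞) < G.egirth)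
    (h : L.endpoint u l = L.endpoint u l') : l = l' := by
  have hp := L.isPath_walk u hl (lt_of_le_of_lt (by simp) hlt)
  have hp' := L.isPath_walk u hl' (lt_of_le_of_lt (by simp) hlt)
  have hlt' : (((L.walk u l).2.length + (L.walk u l').2.length : ℕ) : ℕ∞) < G.egirth := by
    simpa only [length_walk] using hlt
  refine L.walk_injective u ?_
  unfold endpoint at h
  generalize L.walk u l = P at *
  generalize L.walk u l' = P' at *
  obtain ⟨x, p⟩ := P
  obtain ⟨x', p'⟩ := P'
  obtain rfl : x = x' := h
  exact congrArg _ (path_eq_of_length_add_length_lt_egirth hp hp' hlt')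

theorem exists_isReduced_endpoint_eq_next {l : List (Fin r)} (hl : IsReduced l) (a : Fin r) :
    ∃ l', IsReduced l' ∧ l'.length ≤ l.length + 1 ∧ ∀ u, L.endpoint u l' = L.next u l a := by
  by_cases ha : l = [] ∨ (a : ℕ) ≠ 0
  · exact ⟨a :: l, ⟨hl, ha⟩, le_rfl, fun _ => rfl⟩
  · push Not at ha
    obtain ⟨b, l, rfl⟩ := List.exists_cons_of_ne_nil ha.1
    have snd_walk (u : V) : (L.walk u (b :: l)).2.snd = L.endpoint u l := by
      simp [walk, endpoint]
    refine ⟨l, hl.1, by grind, fun u => ?_⟩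
    rw [next, snd_walk]
    exact ((L.nbr_eq_iff (G.adj_symm (L.next u l b).2) a).2 ha.2).symm

theorem exists_isReduced_endpoint_eq {u y : V} (q : G.Walk y u) :
    ∃ l, IsReduced l ∧ l.length ≤ q.length ∧ L.endpoint u l = y := by
  induction q with
  | nil => exact ⟨[], trivial, le_rfl, rfl⟩
  | cons hadj q ih =>
    obtain ⟨l, hl, hlen, rfl⟩ := ih
    obtain ⟨a, ha⟩ := L.adj_endpoint_iff.1 hadj.symm
    obtain ⟨l', hl', hlen', hend⟩ := L.exists_isReduced_endpoint_eq_next hl a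
    exact ⟨l', hl', hlen'.trans (Nat.succ_le_succ hlen), (hend _).trans ha⟩

end Numbering

/-- `φ` preserves the neighbourhood of every vertex at distance less than `k` from `x`. -/
def IsLocalIso (G : SimpleGraph V) (φ : V → V) (k : ℕ) (x : V) : Prop :=
  ∀ ⦃y⦄ (q : G.Walk x y), q.length < k → ∀ z, G.Adj y z ↔ G.Adj (φ y) (φ z)

namespace IsLocalIso

variable {G : SimpleGraph V} {φ : V → V} {k : ℕ} {x y : V}

theorem mono {m : ℕ} (hkm : k ≤ m) (h : IsLocalIso G φ m x) : IsLocalIso G φ k x :=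
  fun _ q hq => h q (hq.trans_le hkm)

theorem adj_iff (h : IsLocalIso G φ (k + 1) x) : G.Adj x y ↔ G.Adj (φ x) (φ y) :=
  h .nil k.succ_pos y

theorem of_adj (h : IsLocalIso G φ (k + 1) x) (hadj : G.Adj x y) : IsLocalIso G φ k y :=
  fun _ q hq => h (.cons hadj q) (Nat.succ_lt_succ hq)

end IsLocalIso

theorem IsRegular.exists_isLocalIso {G : SimpleGraph V} [∀ v, Finite (G.neighborSet v)] {r : ℕ}
    (hreg : IsRegular G r) {k : ℕ} (hk : ((2 * k : ℕ) : ℕ∞) < G.egirth) (u v : V) :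
    ∃ φ : Equiv.Perm V, φ u = v ∧ IsLocalIso G φ k u := by
  obtain ⟨L⟩ := hreg.nonempty_numbering
  let Word := {l : List (Fin r) // l.length ≤ k ∧ IsReduced l}
  have : Finite Word := ((List.finite_length_le (Fin r) k).subset fun l hl => hl.1).to_subtype
  have endpoint_injective (x : V) : Function.Injective fun l : Word => L.endpoint x l :=
    fun l l' h => Subtype.ext <| L.eq_of_endpoint_eq l.2.2 l'.2.2
      (lt_of_le_of_lt (by exact_mod_cast two_mul k ▸ add_le_add l.2.1 l'.2.1) hk) h
  obtain ⟨φ, hφ⟩ :=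
    Equiv.Perm.exists_extending_pair _ _ (endpoint_injective u) (endpoint_injective v)
  refine ⟨φ, hφ ⟨[], k.zero_le, trivial⟩, fun y q hq z => ?_⟩
  obtain ⟨l, hl, hlen, rfl⟩ := L.exists_isReduced_endpoint_eq q.reverse
  rw [q.length_reverse] at hlen
  have φ_next (a : Fin r) : φ (L.next u l a) = L.next v l a := by
    obtain ⟨l', hl', hlen', hend⟩ := L.exists_isReduced_endpoint_eq_next hl a
    rw [← hend, ← hend]
    exact hφ ⟨l', by omega, hl'⟩
  have φ_endpoint : φ (L.endpoint u l) = L.endpoint v l := hφ ⟨l, by omega, hl⟩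
  simp only [φ_endpoint, L.adj_endpoint_iff, ← φ_next, φ.apply_eq_iff_eq]

section RelevantLabels

variable {G : SimpleGraph V} {S : V → Set ℕ} {i j n : ℕ} {v : V}

theorem relevant_iff : Relevant G S i v ↔ (i = 0 ∧ 0 ∈ S v) ∨
    (i ∈ S v ∧ (∀ j < i, ¬ Relevant G S j v) ∧
      ∃! u, G.Adj v u ∧ ∃ j < i, Relevant G S j u) := by
  unfold Relevant
  rw [Nat.strongRecOn_eq]
  simp only [exists_prop]

theorem relevant_zero_iff : Relevant G S 0 v ↔ 0 ∈ S v := by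
  rw [relevant_iff]
  simp

theorem relevant_succ_iff : Relevant G S (n + 1) v ↔ n + 1 ∈ S v ∧ v ∈ Blue G S n := by
  rw [relevant_iff]
  simp [Blue, RelevantLe, Order.lt_add_one_iff]

theorem relevantLe_zero_iff : RelevantLe G S 0 v ↔ 0 ∈ S v := by
  simp [RelevantLe, relevant_zero_iff]

theorem relevantLe_succ_iff :
    RelevantLe G S (n + 1) v ↔ RelevantLe G S n v ∨ (n + 1 ∈ S v ∧ v ∈ Blue G S n) := by
  rw [← relevant_succ_iff]
  simp only [RelevantLe, Nat.le_succ_iff, or_and_right, exists_or, exists_eq_left]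

theorem Relevant.mem (h : Relevant G S i v) : i ∈ S v := by
  cases i with
  | zero => exact relevant_zero_iff.1 h
  | succ n => exact (relevant_succ_iff.1 h).1

theorem Relevant.le (hi : Relevant G S i v) (hj : Relevant G S j v) : i ≤ j := by
  cases i with
  | zero => exact j.zero_le
  | succ n => exact not_le.1 fun hjn => (relevant_succ_iff.1 hi).2.1 ⟨j, hjn, hj⟩

theorem Relevant.unique (hi : Relevant G S i v) (hj : Relevant G S j v) : i = j :=
  (hi.le hj).antisymm (hj.le hi)

/-- The set of vertices which carry the label `i` and none of whose neighbours carries it. -/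
def Isolated (G : SimpleGraph V) (S : V → Set ℕ) (i : ℕ) : Set V :=
  {v | i ∈ S v ∧ ∀ x, G.Adj v x → i ∉ S x}

theorem Relevant.mem_pbar (h : Relevant G S i v) (hv : v ∈ Isolated G S i) (hi : i ≤ n) :
    v ∈ Pbar G S n :=
  ⟨⟨i, hi, h⟩, fun x hx _ hj hjx => hv.2 x hx (h.unique hj ▸ hjx.mem)⟩

end RelevantLabels

section Transport

variable {G : SimpleGraph V} {S : V → Set ℕ} {φ : Equiv.Perm V} {n : ℕ} {x : V}

theorem mem_blue_comp_iff_of_relevantLe_comp_iff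
    (hR : ∀ y, IsLocalIso G φ n y → (RelevantLe G (S ∘ φ) n y ↔ RelevantLe G S n (φ y)))
    (hx : IsLocalIso G φ (n + 1) x) : x ∈ Blue G (S ∘ φ) n ↔ φ x ∈ Blue G S n := by
  refine and_congr (not_congr (hR x (hx.mono n.le_succ))) (φ.existsUnique_congr fun {y} => ?_)
  rw [← hx.adj_iff]
  exact and_congr_right fun hy => hR y (hx.of_adj hy)

theorem relevantLe_comp_iff (hx : IsLocalIso G φ n x) :
    RelevantLe G (S ∘ φ) n x ↔ RelevantLe G S n (φ x) := by
  induction n generalizing x with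
  | zero => simp only [relevantLe_zero_iff, Function.comp_apply]
  | succ n ih =>
    rw [relevantLe_succ_iff, relevantLe_succ_iff, ih (hx.mono n.le_succ),
      mem_blue_comp_iff_of_relevantLe_comp_iff (fun _ => ih) hx, Function.comp_apply]

theorem mem_blue_comp_iff (hx : IsLocalIso G φ (n + 1) x) :
    x ∈ Blue G (S ∘ φ) n ↔ φ x ∈ Blue G S n :=
  mem_blue_comp_iff_of_relevantLe_comp_iff (fun _ => relevantLe_comp_iff) hx

end Transport

section Measurability

/-- The σ-algebra generated by the labels belonging to `T`. -/
abbrev labelSigma (V : Type*) (T : Set ℕ) : MeasurableSpace (V → ℕ → Bool) :=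
  MeasurableSpace.generateFrom {A | ∃ q ∈ {q : V × ℕ | q.2 ∈ T}, {ω | ω q.1 q.2 = true} = A}

/-- Event that `v` carries the label `i` and no neighbour of `v` does. -/
def IEv (G : SimpleGraph V) (i : ℕ) (v : V) : Set (V → ℕ → Bool) :=
  {ω | v ∈ Isolated G (labels ω) i}

variable {T : Set ℕ} {i : ℕ}

theorem measurableSet_label (v : V) (i : ℕ) : MeasurableSet {ω : V → ℕ → Bool | ω v i = true} :=
  (by fun_prop : Measurable fun ω : V → ℕ → Bool => ω v i) (measurableSet_singleton true)

theorem labelSigma_le : labelSigma V T ≤ MeasurableSpace.pi := by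
  refine MeasurableSpace.generateFrom_le ?_
  rintro _ ⟨q, -, rfl⟩
  exact measurableSet_label q.1 q.2

theorem measurableSet_labelSigma (hi : i ∈ T) (v : V) :
    MeasurableSet[labelSigma V T] {ω | ω v i = true} :=
  MeasurableSpace.measurableSet_generateFrom ⟨(v, i), hi, rfl⟩

theorem measurableSet_existsUnique {Ω ι : Type*} [MeasurableSpace Ω] [Countable ι]
    {A : ι → Set Ω} (hA : ∀ i, MeasurableSet (A i)) : MeasurableSet {ω | ∃! i, ω ∈ A i} :=
  measurableSet_setOfPred.2 <| Measurable.exists fun i =>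
    (measurableSet_setOfPred.1 (hA i)).and <| Measurable.forall fun j =>
      (measurableSet_setOfPred.1 (hA j)).imp measurable_const

variable [Countable V] (G : SimpleGraph V)

theorem measurableSet_BEv_of_measurableSet_RLeEv {m : MeasurableSpace (V → ℕ → Bool)} {n : ℕ}
    (hR : ∀ v, MeasurableSet[m] (RLeEv G n v)) (v : V) : MeasurableSet[m] (BEv G n v) :=
  (hR v).compl.inter <| measurableSet_existsUnique fun w =>
    (MeasurableSet.const (G.Adj v w)).inter (hR w)

theorem measurableSet_RLeEv {n : ℕ} (hT : Iic n ⊆ T) (v : V) :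
    MeasurableSet[labelSigma V T] (RLeEv G n v) := by
  induction n generalizing v with
  | zero =>
    simpa only [RLeEv, relevantLe_zero_iff] using! measurableSet_labelSigma (hT self_mem_Iic) v
  | succ n ih =>
    have hR := ih ((Iic_subset_Iic.2 n.le_succ).trans hT)
    simp only [RLeEv, relevantLe_succ_iff]
    exact (hR v).union <| (measurableSet_labelSigma (hT self_mem_Iic) v).inter
      (measurableSet_BEv_of_measurableSet_RLeEv G hR v)

theorem measurableSet_BEv {n : ℕ} (hT : Iic n ⊆ T) (v : V) :
    MeasurableSet[labelSigma V T] (BEv G n v) :=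
  measurableSet_BEv_of_measurableSet_RLeEv G (measurableSet_RLeEv G hT) v

theorem measurableSet_IEv (hi : i ∈ T) (v : V) : MeasurableSet[labelSigma V T] (IEv G i v) := by
  have hset : IEv G i v = {ω | ω v i = true} ∩ ⋂ x ∈ G.neighborSet v, {ω | ω x i = true}ᶜ := by
    ext ω
    simp [IEv, Isolated, labels]
  exact hset ▸ (measurableSet_labelSigma hi v).inter
    (.biInter (Set.to_countable _) fun x _ => (measurableSet_labelSigma hi x).compl)

theorem measurableSet_REv (i : ℕ) (v : V) : MeasurableSet (REv G i v) := by
  cases i with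
  | zero => simpa only [REv, relevant_zero_iff] using! measurableSet_label v 0
  | succ n =>
    simp only [REv, relevant_succ_iff]
    exact (measurableSet_label v (n + 1)).inter
      (labelSigma_le _ (measurableSet_BEv G (Set.subset_univ _) v))

theorem measurableSet_mem_pbar (N : ℕ) (v : V) :
    MeasurableSet {ω : V → ℕ → Bool | v ∈ Pbar G (labels ω) N} := by
  have hset : {ω : V → ℕ → Bool | v ∈ Pbar G (labels ω) N} =
      RLeEv G N v ∩ ⋂ x ∈ G.neighborSet v, ⋂ i, (REv G i v ∩ REv G i x)ᶜ := by
    ext ω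
    simp [Pbar, RLeEv, REv]
  exact hset ▸ (labelSigma_le _ (measurableSet_RLeEv G (Set.subset_univ _) v)).inter
    (.biInter (Set.to_countable _) fun x _ => .iInter fun i =>
      ((measurableSet_REv G i v).inter (measurableSet_REv G i x)).compl)

end Measurability

namespace IsLabelMeasure

variable {μ ν : Measure (V → ℕ → Bool)} {p₀ p : ℝ}

theorem iIndepFun (hμ : IsLabelMeasure μ p₀ p) :
    iIndepFun (fun (q : V × ℕ) (ω : V → ℕ → Bool) => ω q.1 q.2) μ := by
  rw [iIndepFun_iff_iIndep]
  refine iIndep_of_iIndep_of_le ((iIndepSet_iff_iIndep _ _).1 hμ.2.1) fun q => ?_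
  exact Measurable.comap_le <| measurable_to_bool <|
    MeasurableSpace.measurableSet_generateFrom (mem_singleton _)

theorem indep_labelSigma (hμ : IsLabelMeasure μ p₀ p) {T T' : Set ℕ} (h : Disjoint T T') :
    Indep (labelSigma V T) (labelSigma V T') μ :=
  hμ.2.1.indep_generateFrom_of_disjoint (fun q => measurableSet_label q.1 q.2) _ _
    (h.preimage Prod.snd)

theorem ext (hμ : IsLabelMeasure μ p₀ p) (hν : IsLabelMeasure ν p₀ p) : μ = ν := by
  have := hμ.1
  have := hν.1
  have coord (q : V × ℕ) : Measurable fun ω : V → ℕ → Bool => ω q.1 q.2 := by fun_prop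
  have map_coord (q : V × ℕ) : μ.map (fun ω => ω q.1 q.2) = ν.map (fun ω => ω q.1 q.2) := by
    have := Measure.isProbabilityMeasure_map (μ := μ) (coord q).aemeasurable
    have := Measure.isProbabilityMeasure_map (μ := ν) (coord q).aemeasurable
    have map_true : μ.map (fun ω => ω q.1 q.2) {true} = ν.map (fun ω => ω q.1 q.2) {true} := by
      rw [Measure.map_apply (coord q) (measurableSet_singleton _),
        Measure.map_apply (coord q) (measurableSet_singleton _)]
      exact (hμ.2.2 q.1 q.2).trans (hν.2.2 q.1 q.2).symm
    refine Measure.ext_of_singleton fun b => ?_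
    cases b with
    | true => exact map_true
    | false =>
      rw [← Bool.not_true, ← Bool.compl_singleton,
        prob_compl_eq_one_sub (measurableSet_singleton _),
        prob_compl_eq_one_sub (measurableSet_singleton _), map_true]
  refine (MeasurableEquiv.curry V ℕ Bool).symm.map_measurableEquiv_injective ?_
  exact (hμ.iIndepFun.map_fun_eq_infinitePi_map coord).trans <|
    (congrArg Measure.infinitePi (funext map_coord)).trans
      (hν.iIndepFun.map_fun_eq_infinitePi_map coord).symm

theorem map_comp (hμ : IsLabelMeasure μ p₀ p) {W : Type*} {φ : W → V}
    (hφ : Function.Injective φ) : IsLabelMeasure (μ.map fun ω => ω ∘ φ) p₀ p := by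
  have := hμ.1
  have hcomp : Measurable fun ω : V → ℕ → Bool => ω ∘ φ := by
    unfold Function.comp; fun_prop
  refine ⟨Measure.isProbabilityMeasure_map hcomp.aemeasurable, ?_, fun w i => ?_⟩
  · have hlabel (q : W × ℕ) : MeasurableSet {ω : W → ℕ → Bool | ω q.1 q.2 = true} :=
      measurableSet_label q.1 q.2
    have hindep := hμ.2.1.precomp (hφ.prodMap (Function.injective_id (α := ℕ)))
    refine (iIndepSet_iff_meas_biInter hlabel).2 fun s => ?_
    simp only [Measure.map_apply hcomp (hlabel _),
      Measure.map_apply hcomp (s.measurableSet_biInter fun q _ => hlabel q), Set.preimage_iInter]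
    exact hindep.meas_biInter s
  · rw [Measure.map_apply hcomp (measurableSet_label w i)]
    exact hμ.2.2 (φ w) i

theorem measure_BEv_eq [Countable V] (hμ : IsLabelMeasure μ p₀ p) {G : SimpleGraph V}
    {φ : Equiv.Perm V} {n : ℕ} {u : V} (hφ : IsLocalIso G φ (n + 1) u) :
    μ (BEv G n u) = μ (BEv G n (φ u)) := by
  have hcomp : Measurable fun ω : V → ℕ → Bool => ω ∘ φ := by
    unfold Function.comp; fun_prop
  calc μ (BEv G n u) = μ.map (fun ω => ω ∘ φ) (BEv G n u) := by
        rw [(hμ.map_comp φ.injective).ext hμ]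
    _ = μ ((fun ω => ω ∘ φ) ⁻¹' BEv G n u) :=
        Measure.map_apply hcomp (labelSigma_le _ (measurableSet_BEv G (Set.subset_univ _) u))
    _ = μ (BEv G n (φ u)) := congrArg μ (Set.ext fun ω => mem_blue_comp_iff (S := labels ω) hφ)

theorem measureReal_label (hμ : IsLabelMeasure μ p₀ p) (hp₀ : 0 ≤ p₀) (hp : 0 ≤ p) (v : V)
    (i : ℕ) : μ.real {ω | ω v i = true} = if i = 0 then p₀ else p := by
  rw [measureReal_def, hμ.2.2, ENNReal.toReal_ofReal (by split_ifs <;> assumption)]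

theorem measureReal_IEv (hμ : IsLabelMeasure μ p₀ p) (hp₀ : 0 ≤ p₀) (hp : 0 ≤ p)
    (G : SimpleGraph V) (i : ℕ) (v : V) [Finite (G.neighborSet v)] :
    μ.real (IEv G i v) = (if i = 0 then p₀ else p) *
      (1 - if i = 0 then p₀ else p) ^ (G.neighborSet v).ncard := by
  classical
  have := hμ.1
  set t : ℝ := if i = 0 then p₀ else p with ht
  set s : Finset V := (Set.toFinite (G.neighborSet v)).toFinset with hs
  have hset : IEv G i v =
      ⋂ x ∈ insert v s, (fun ω : V → ℕ → Bool => ω x i) ⁻¹' {decide (x = v)} := by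
    ext ω
    have ne_of_adj (x : V) (hx : G.Adj v x) : x ≠ v := hx.ne'
    simp +contextual [IEv, Isolated, labels, hs, ne_of_adj]
  have hindep := (hμ.iIndepFun.precomp (Prod.mk_left_injective i)).measure_inter_preimage_eq_mul
    (insert v s) (sets := fun x => {decide (x = v)}) fun _ _ => measurableSet_singleton _
  have real_coord (x : V) : μ.real ((fun ω : V → ℕ → Bool => ω x i) ⁻¹' {decide (x = v)}) =
      if x = v then t else 1 - t := by
    split_ifs with hx
    · simpa [hx] using! hμ.measureReal_label hp₀ hp v i
    · rw [ht, ← hμ.measureReal_label hp₀ hp x i,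
        ← probReal_compl_eq_one_sub (measurableSet_label x i)]
      exact congrArg μ.real (Set.ext fun ω => by simp [hx])
  have hv : v ∉ s := by simp [hs]
  calc μ.real (IEv G i v)
      = ∏ x ∈ insert v s, μ.real ((fun ω : V → ℕ → Bool => ω x i) ⁻¹' {decide (x = v)}) := by
        rw [hset, measureReal_def, hindep, ENNReal.toReal_prod]; rfl
    _ = t * ∏ x ∈ s, (1 - t) := by
        rw [Finset.prod_insert hv, real_coord, if_pos rfl]
        exact congrArg _ (Finset.prod_congr rfl fun x hx => by
          rw [real_coord, if_neg (ne_of_mem_of_not_mem hx hv)])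
    _ = t * (1 - t) ^ (G.neighborSet v).ncard := by
        rw [Finset.prod_const, Set.ncard_eq_toFinset_card _ (Set.toFinite _)]

end IsLabelMeasure

section LowerBound

theorem REv_zero_inter_IEv (G : SimpleGraph V) (v : V) :
    REv G 0 v ∩ IEv G 0 v = IEv G 0 v :=
  inter_eq_right.2 fun _ hω => relevant_zero_iff.2 hω.1

theorem REv_succ_inter_IEv (G : SimpleGraph V) (n : ℕ) (v : V) :
    REv G (n + 1) v ∩ IEv G (n + 1) v = BEv G n v ∩ IEv G (n + 1) v :=
  Set.ext fun _ => and_congr_left fun hI =>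
    relevant_succ_iff.trans (and_iff_right hI.1)

theorem REv_inter_IEv_subset (G : SimpleGraph V) {i N : ℕ} (hi : i ≤ N) (v : V) :
    REv G i v ∩ IEv G i v ⊆ {ω | v ∈ Pbar G (labels ω) N} :=
  fun _ hω => hω.1.mem_pbar hω.2 hi

theorem pairwise_disjoint_REv (G : SimpleGraph V) (v : V) :
    Pairwise (Function.onFun Disjoint fun i => REv G i v) :=
  fun _ _ hij => Set.disjoint_left.2 fun _ hi hj => hij (hi.unique hj)

variable [Countable V] {μ : Measure (V → ℕ → Bool)} {p₀ p : ℝ}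

theorem IsLabelMeasure.measureReal_BEv_inter_IEv (hμ : IsLabelMeasure μ p₀ p)
    (G : SimpleGraph V) (n : ℕ) (v : V) :
    μ.real (BEv G n v ∩ IEv G (n + 1) v) = μ.real (BEv G n v) * μ.real (IEv G (n + 1) v) := by
  have hdisj : Disjoint (Iic n) {n + 1} := by simp
  simp only [measureReal_def, ← ENNReal.toReal_mul]
  exact congrArg ENNReal.toReal <| (Indep_iff _ _ μ).1 (hμ.indep_labelSigma hdisj) _ _
    (measurableSet_BEv G subset_rfl v) (measurableSet_IEv G (mem_singleton _) v)

theorem IsLabelMeasure.le_measureReal_mem_pbar (hμ : IsLabelMeasure μ p₀ p) (hp₀ : 0 ≤ p₀)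
    (hp : 0 ≤ p) (G : SimpleGraph V) (N : ℕ) (v : V) [Finite (G.neighborSet v)] :
    p₀ * (1 - p₀) ^ (G.neighborSet v).ncard + ∑ i ∈ Finset.Icc 1 N,
        p * (1 - p) ^ (G.neighborSet v).ncard * μ.real (BEv G (i - 1) v) ≤
      μ.real {ω | v ∈ Pbar G (labels ω) N} := by
  have := hμ.1
  have hzero : μ.real (REv G 0 v ∩ IEv G 0 v) = p₀ * (1 - p₀) ^ (G.neighborSet v).ncard := by
    rw [REv_zero_inter_IEv, hμ.measureReal_IEv hp₀ hp]
    simp only [if_true]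
  have hpos {i : ℕ} (hi : i ∈ Finset.Icc 1 N) : μ.real (REv G i v ∩ IEv G i v) =
      p * (1 - p) ^ (G.neighborSet v).ncard * μ.real (BEv G (i - 1) v) := by
    obtain ⟨n, rfl⟩ := Nat.exists_eq_add_of_le' (Finset.mem_Icc.1 hi).1
    rw [REv_succ_inter_IEv, hμ.measureReal_BEv_inter_IEv, hμ.measureReal_IEv hp₀ hp,
      if_neg n.succ_ne_zero, mul_comm, Nat.add_sub_cancel]
  have hmeas (i : ℕ) : MeasurableSet (REv G i v ∩ IEv G i v) :=
    (measurableSet_REv G i v).inter (labelSigma_le _ (measurableSet_IEv G (Set.mem_univ i) v))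
  calc p₀ * (1 - p₀) ^ (G.neighborSet v).ncard + ∑ i ∈ Finset.Icc 1 N,
        p * (1 - p) ^ (G.neighborSet v).ncard * μ.real (BEv G (i - 1) v)
      = ∑ i ∈ insert 0 (Finset.Icc 1 N), μ.real (REv G i v ∩ IEv G i v) := by
        rw [Finset.sum_insert (by simp), hzero, Finset.sum_congr rfl fun i => hpos]
    _ = μ.real (⋃ i ∈ insert 0 (Finset.Icc 1 N), REv G i v ∩ IEv G i v) :=
        (measureReal_biUnion_finset (fun i _ j _ hij => (pairwise_disjoint_REv G v hij).mono
          inter_subset_left inter_subset_left) fun i _ => hmeas i).symm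
    _ ≤ μ.real {ω | v ∈ Pbar G (labels ω) N} :=
        measureReal_mono <| iUnion₂_subset fun i hi => REv_inter_IEv_subset G (by grind) v

end LowerBound

theorem integral_ncard_eq_sum_measureReal {ι Ω : Type*} [Fintype ι] [MeasurableSpace Ω]
    {ν : Measure Ω} [IsFiniteMeasure ν] {X : Ω → Set ι} (hX : ∀ i, MeasurableSet {ω | i ∈ X ω}) :
    ∫ ω, ((X ω).ncard : ℝ) ∂ν = ∑ i, ν.real {ω | i ∈ X ω} := by
  classical
  have ncard_eq (ω : Ω) : ((X ω).ncard : ℝ) = ∑ i, {ω | i ∈ X ω}.indicator 1 ω := by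
    simp [Set.indicator_apply, Finset.sum_boole, Set.ncard_eq_toFinset_card', Set.toFinset_card,
      Fintype.card_subtype]
  simp only [ncard_eq]
  rw [integral_finsetSum _ fun i _ => (integrable_const 1).indicator (hX i)]
  exact Finset.sum_congr rfl fun i _ => integral_indicator_one (hX i)

theorem expected_size_pbar_general [Fintype V] {r N : ℕ} {G : SimpleGraph V}
    (hreg : IsRegular G r) (hN : ((2 * N : ℕ) : ℕ∞) < G.egirth) {p₀ p : ℝ} (hp₀ : 0 ≤ p₀)
    (hp : 0 ≤ p) {μ : Measure (V → ℕ → Bool)} (hμ : IsLabelMeasure μ p₀ p) (u : V) :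
    p₀ * (1 - p₀) ^ r * (Fintype.card V : ℝ)
      + ∑ i ∈ Finset.Icc 1 N,
          p * (1 - p) ^ r * (μ (BEv G (i - 1) u)).toReal * (Fintype.card V : ℝ)
      ≤ ∫ ω, ((Pbar G (labels ω) N).ncard : ℝ) ∂μ := by
  have := hμ.1
  have hblue (v : V) {i : ℕ} (hi : i ∈ Finset.Icc 1 N) :
      μ.real (BEv G (i - 1) v) = μ.real (BEv G (i - 1) u) := by
    obtain ⟨h1, hiN⟩ := Finset.mem_Icc.1 hi
    have hgirth : ((2 * (i - 1 + 1) : ℕ) : ℕ∞) < G.egirth :=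
      lt_of_le_of_lt (by gcongr; omega) hN
    obtain ⟨φ, rfl, hφ⟩ := hreg.exists_isLocalIso hgirth v u
    exact congrArg ENNReal.toReal (hμ.measure_BEv_eq hφ)
  have hvertex (v : V) : p₀ * (1 - p₀) ^ r + ∑ i ∈ Finset.Icc 1 N,
      p * (1 - p) ^ r * μ.real (BEv G (i - 1) u) ≤ μ.real {ω | v ∈ Pbar G (labels ω) N} := by
    have h := hμ.le_measureReal_mem_pbar hp₀ hp G N v
    rwa [hreg v, Finset.sum_congr rfl fun i hi => by rw [hblue v hi]] at h
  rw [← Finset.sum_mul, ← add_mul, mul_comm,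
    integral_ncard_eq_sum_measureReal (measurableSet_mem_pbar G N), ← nsmul_eq_mul]
  exact Finset.card_nsmul_le_sum Finset.univ _ _ fun v _ => hvertex v

/-- The expected size of `P̄` is at least
`p₀(1−p₀)^r·n + Σ_{i=1}^{N} p(1−p)^r·b_{i−1}·n`. -/
theorem expected_size_pbar
    [Fintype V] (r g : ℕ) (G : SimpleGraph V)
    (hreg : IsRegular G r) (hg : (g : ℕ∞) ≤ G.egirth)
    (p₀ p : ℝ) (hp₀ : p₀ ∈ Ioo (0 : ℝ) 1) (hp : p ∈ Ioo (0 : ℝ) 1)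
    (μ : Measure (V → ℕ → Bool)) (hμ : IsLabelMeasure μ p₀ p)
    (N : ℕ) (hN : 1 ≤ N) (hNg : 2 * N < g - 3)
    (u : V) :
    p₀ * (1 - p₀) ^ r * (Fintype.card V : ℝ)
      + ∑ i ∈ Finset.Icc 1 N,
          p * (1 - p) ^ r * (μ (BEv G (i - 1) u)).toReal * (Fintype.card V : ℝ)
      ≤ ∫ ω, ((Pbar G (labels ω) N).ncard : ℝ) ∂μ :=
  expected_size_pbar_general hreg (lt_of_lt_of_le (by norm_cast; omega) hg) hp₀.1.le hp.1.le hμ u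

end InducedForest
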